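/- There exists a class of languages that is learnable by a monotone behaviorally correct full-information learner from informants but not by any cautious behaviorally correct full-information learner from informants: [Inf G Mon Bc] \ [Inf G Caut Bc] ≠ ∅. -/

import Mathlib

open Filter Classical

namespace InfBc

/-! ### Basic notions: r.e. sets, informants, learners -/

/-- The `e`-th recursively enumerable set (via an acceptable numbering of
partial computable functions, `W e = dom φ_e`). -/
def W (e : ℕ) : Set ℕ := {x | ((Denumerable.ofNat Nat.Partrec.Code e).eval x).Dom}

/-- A language is recursively enumerable. -/
def RE (L : Set ℕ) : Prop := ∃ e, W e = L

abbrev Datum := ℕ × Bool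
abbrev Seq := List Datum
abbrev Informant := ℕ → Datum
abbrev HypSeq := ℕ → Part ℕ
/-- Learners are partial functions; all input types are coded into `ℕ`. -/
abbrev Learner := ℕ →. ℕ
abbrev Restriction := HypSeq → Informant → Prop

/-- Positive information of an infinite sequence. -/
def posI (I : Informant) : Set ℕ := {x | ∃ n, I n = (x, true)}
/-- Negative information of an infinite sequence. -/
def negI (I : Informant) : Set ℕ := {x | ∃ n, I n = (x, false)}

/-- `I` is an informant for the language `L`. -/
def IsInformant (I : Informant) (L : Set ℕ) : Prop := posI I = L ∧ negI I = Lᶜ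

/-- `I` is an informant (for some language), i.e. `I ∈ Inf`. -/
def IsInf (I : Informant) : Prop := IsInformant I (posI I)

/-- `I` is a canonical informant. -/
def Canonical (I : Informant) : Prop := ∀ x, I x = (x, true) ∨ I x = (x, false)

/-- `I[n]`, the length-`n` initial segment of `I`. -/
def segment (I : Informant) (n : ℕ) : Seq := (List.range n).map I

/-- Positive information of a finite sequence. -/
def posS (σ : Seq) : Set ℕ := {x | (x, true) ∈ σ}
/-- Negative information of a finite sequence. -/
def negS (σ : Seq) : Set ℕ := {x | (x, false) ∈ σ}
/-- The content of a finite sequence, as a set. -/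
def contentS (σ : Seq) : Set Datum := {a | a ∈ σ}

/-! ### Interaction operators -/

abbrev InteractionOperator := Learner → Informant → HypSeq

/-- Full-information (Gold-style) interaction: `G(h,I)(i) = h(I[i])`. -/
def Gop : InteractionOperator := fun h I i => h (Encodable.encode (segment I i))

/-- Set-driven interaction: `Sd(h,I)(i) = h(content(I[i]))`. -/
def Sdop : InteractionOperator := fun h I i => h (Encodable.encode (segment I i).toFinset)

/-- The iterated evaluation of an iterative learner on a finite sequence:
start with the initial hypothesis `h(none)` and feed the data one by one. -/
def iterExtend (h : Learner) (σ : Seq) : Part ℕ :=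
  σ.foldl (fun pe a => pe.bind fun e => h (Encodable.encode (some (e, a))))
    (h (Encodable.encode (none : Option (ℕ × Datum))))

/-- Iterative interaction: `It(h,I)(i)` is obtained by feeding `I[i]` one datum
at a time, each time updating the previous hypothesis. -/
def Itop : InteractionOperator := fun h I i => iterExtend h (segment I i)

/-- An iterative learner is confluent if the order and multiplicity in which
the content is presented does not matter. -/
def ConfluentLearner (h : Learner) : Prop :=
  ∀ σ τ : Seq, contentS σ = contentS τ → iterExtend h σ = iterExtend h τ

/-- Confluently iterative interaction. -/
noncomputable def CflItop : InteractionOperator := fun h I i =>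
  if ConfluentLearner h then iterExtend h (segment I i) else Part.none

/-- `β ≼ β'`: every (partial computable) `β`-learner can be translated into a
`β'`-learner with the same hypothesis sequence on every informant. -/
def OpLe (β β' : InteractionOperator) : Prop :=
  ∀ h : Learner, Partrec h → ∃ h' : Learner, Partrec h' ∧
    ∀ I : Informant, IsInf I → ∀ n, β h I n = β' h' I n

/-! ### Learning restrictions -/

/-- The trivial restriction `T`. -/
def TT : Restriction := fun _ _ => True

/-- Explanatory identification. -/
def Ex : Restriction := fun p I =>
  ∃ q, W q = posI I ∧ ∀ᶠ n in atTop, p n = Part.some q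

/-- Behaviorally correct identification. -/
def Bc : Restriction := fun p I => ∀ᶠ n in atTop, ∃ e ∈ p n, W e = posI I

/-- Consistency of a hypothesis with a finite sequence of data. -/
def ConsH (e : ℕ) (σ : Seq) : Prop := posS σ ⊆ W e ∧ negS σ ∩ W e = ∅

/-- Consistency of a hypothesis sequence with an informant. -/
def Cons : Restriction := fun p I => ∀ n, ∃ e ∈ p n, ConsH e (segment I n)

/-- Strongly monotone. -/
def SMon : Restriction := fun p _ =>
  ∀ s t, s ≤ t → ∀ e ∈ p s, ∀ e' ∈ p t, W e ⊆ W e'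

/-- Dual strongly monotone. -/
def SMond : Restriction := fun p _ =>
  ∀ s t, s ≤ t → ∀ e ∈ p s, ∀ e' ∈ p t, W e' ⊆ W e

/-- Monotone. -/
def Mon : Restriction := fun p I =>
  ∀ s t, s ≤ t → ∀ e ∈ p s, ∀ e' ∈ p t, W e ∩ posI I ⊆ W e' ∩ posI I

/-- Dual monotone. -/
def Mond : Restriction := fun p I =>
  ∀ s t, s ≤ t → ∀ e ∈ p s, ∀ e' ∈ p t, (W e)ᶜ ∩ negI I ⊆ (W e')ᶜ ∩ negI I

/-- Weakly monotone. -/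
def WMon : Restriction := fun p I =>
  ∀ s t, s ≤ t → ∀ e ∈ p s, ConsH e (segment I t) → ∀ e' ∈ p t, W e ⊆ W e'

/-- Dual weakly monotone. -/
def WMond : Restriction := fun p I =>
  ∀ s t, s ≤ t → ∀ e ∈ p s, ConsH e (segment I t) → ∀ e' ∈ p t, W e' ⊆ W e

/-- Cautious. -/
def Caut : Restriction := fun p _ =>
  ∀ s t, s < t → ∀ e ∈ p s, ∀ e' ∈ p t, ¬ W e' ⊂ W e

/-- Target cautious. -/
def CautTar : Restriction := fun p I =>
  ∀ s, ∀ e ∈ p s, ¬ posI I ⊂ W e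

/-- Finitely cautious. -/
def CautFin : Restriction := fun p _ =>
  ∀ s t, s < t → ∀ e ∈ p s, ∀ e' ∈ p t, W e' ⊂ W e → (W e').Infinite

/-- Infinitely cautious. -/
def CautInf : Restriction := fun p _ =>
  ∀ s t, s < t → ∀ e ∈ p s, ∀ e' ∈ p t, W e' ⊂ W e → (W e').Finite

/-! ### Learnability -/

/-- The class of admissible learners: all partial computable learners. -/
def AllL : Learner → Prop := fun _ => True
/-- The class of admissible learners: total computable learners (`ℛ`). -/
def TotalL : Learner → Prop := fun h => ∀ x, (h x).Dom
/-- Admissible informants: all informants (`Inf`). -/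
def AllI : Informant → Prop := fun _ => True

/-- `h` learns `L` in the setting given by admissible informants `P`,
interaction operator `β` and local restriction `δ`. -/
def LearnsWith (P : Informant → Prop) (β : InteractionOperator) (δ : Restriction)
    (h : Learner) (L : Set ℕ) : Prop :=
  RE L ∧ ∀ I : Informant, P I → IsInformant I L → δ (β h I) I

/-- `[τ(α) C P β δ]`: the collection of all classes of languages learnable by
some learner in `C` that satisfies the global restriction `α` on all admissible
informants, under interaction operator `β` and local restriction `δ`. -/
def Learnable (α : Restriction) (C : Learner → Prop) (P : Informant → Prop)
    (β : InteractionOperator) (δ : Restriction) : Set (Set (Set ℕ)) :=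
  {𝓛 | ∃ h : Learner, Partrec h ∧ C h ∧
        (∀ I : Informant, IsInf I → P I → α (β h I) I) ∧
        ∀ L ∈ 𝓛, LearnsWith P β δ h L}

/-! ### Properties of restrictions -/

/-- A learning restriction is delayable if it is preserved under postponing
hypotheses along a non-decreasing unbounded function. -/
def Delayable (δ : Restriction) : Prop :=
  ∀ I I' : Informant, IsInf I → IsInf I' → Set.range I = Set.range I' →
    ∀ (p : HypSeq) (s : ℕ → ℕ), Monotone s → (∀ m, ∃ n, m ≤ s n) →
      δ p I → (∀ n, contentS (segment I (s n)) ⊆ contentS (segment I' n)) →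
      δ (fun n => p (s n)) I'

/-- A learning restriction is semantic if it is indifferent to replacing the
hypothesis sequence by a semantically equivalent one. -/
def Semantic (δ : Restriction) : Prop :=
  ∀ (p p' : HypSeq) (I : Informant), δ p I →
    (∀ i, (p i).Dom ↔ (p' i).Dom) →
    (∀ i, ∀ e ∈ p i, ∀ e' ∈ p' i, W e = W e') →
    δ p' I


/-- The predicate used by the learner: membership of `(y,false)` in the coded sequence. -/
def negTest (p : ℕ) : Bool :=
  decide ((((Encodable.decode (α := Seq) p.unpair.1).getD []).idxOf (p.unpair.2, false)) <
    ((Encodable.decode (α := Seq) p.unpair.1).getD []).length)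

theorem negTest_primrec : Primrec negTest := by
  have h1 : Primrec fun p : ℕ => (Encodable.decode (α := Seq) p.unpair.1).getD [] :=
    Primrec.option_getD.comp
      (Primrec.decode.comp (Primrec.fst.comp Primrec.unpair)) (Primrec.const [])
  have h2 : Primrec fun p : ℕ => ((p.unpair.2, false) : Datum) :=
    Primrec.pair (Primrec.snd.comp Primrec.unpair) (Primrec.const false)
  have h3 := Primrec.list_idxOf.comp h2 h1
  have h4 := Primrec.list_length.comp h1
  have h5 := Primrec.nat_lt.decide.comp h3 h4
  refine h5.of_eq fun p => ?_
  rw [Bool.eq_iff_iff]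
  simp only [negTest, decide_eq_true_eq, List.idxOf_lt_length_iff]

theorem negTest_iff (σ : Seq) (y : ℕ) :
    negTest (Nat.pair (Encodable.encode σ) y) = true ↔ (y, false) ∈ σ := by
  simp [negTest, List.idxOf_lt_length_iff]

theorem exists_learner : ∃ h : ℕ → ℕ, Computable h ∧
    ∀ σ : Seq, W (h (Encodable.encode σ)) = (negS σ)ᶜ := by
  have hf : Nat.Partrec (fun p : ℕ => bif negTest p then Part.none else Part.some 0) :=
    Partrec.nat_iff.1
      (Partrec.cond negTest_primrec.to_comp Partrec.none (Computable.const 0).partrec)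
  obtain ⟨c, hc⟩ := Nat.Partrec.Code.exists_code.1 hf
  refine ⟨fun n => Encodable.encode (Nat.Partrec.Code.curry c n), ?_, ?_⟩
  · exact (Primrec.encode.comp
      (Nat.Partrec.Code.primrec₂_curry.comp (Primrec.const c) Primrec.id)).to_comp
  · intro σ
    ext y
    have := negTest_iff σ y
    simp only [W, Set.mem_ofPred_eq, Denumerable.ofNat_encode, Nat.Partrec.Code.eval_curry, hc,
      Set.mem_compl_iff, negS, ← this]
    cases negTest (Nat.pair (Encodable.encode σ) y) <;> simp

theorem mem_segment {I : Informant} {n : ℕ} {a : Datum} :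
    a ∈ segment I n ↔ ∃ m < n, I m = a := by
  simp [segment]

/-- `ℕ` together with all complements of singletons. -/
def cls : Set (Set ℕ) := {L | L = Set.univ ∨ ∃ x, L = {x}ᶜ}

/-- `[Inf G Mon Bc] \ [Inf G Caut Bc] ≠ ∅`. -/
theorem caut_proper :
    (Learnable TT AllL AllI Gop (fun p I => Mon p I ∧ Bc p I) \
      Learnable TT AllL AllI Gop (fun p I => Caut p I ∧ Bc p I)).Nonempty := by
  refine ⟨cls, ?_, ?_⟩
  · obtain ⟨h, hh, hW⟩ := exists_learner
    refine ⟨fun n => Part.some (h n), hh.partrec, trivial, fun _ _ _ => trivial, ?_⟩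
    intro L hL
    refine ⟨?_, ?_⟩
    · rcases hL with rfl | ⟨x, rfl⟩
      · exact ⟨_, (hW []).trans (by simp [negS])⟩
      · exact ⟨_, (hW [(x, false)]).trans (by ext; simp [negS])⟩
    · intro I _ ⟨hp, hn⟩
      have sub : ∀ n, negS (segment I n) ⊆ Lᶜ := by
        intro n y hy
        obtain ⟨m, -, hm⟩ := mem_segment.1 hy
        rw [← hn]
        exact ⟨m, hm⟩
      refine ⟨?_, ?_⟩
      · intro s t _ e he e' he' y hy
        refine ⟨?_, hy.2⟩
        obtain rfl := Part.mem_some_iff.1 he'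
        rw [hW]
        intro hy'
        exact sub t hy' (hp ▸ hy.2)
      · have key : ∃ N, ∀ n ≥ N, Lᶜ ⊆ negS (segment I n) := by
          rcases hL with rfl | ⟨x, rfl⟩
          · exact ⟨0, by simp⟩
          · have : x ∈ negI I := by rw [hn]; simp
            obtain ⟨m, hm⟩ := this
            refine ⟨m + 1, fun n hnm y hy => ?_⟩
            have hyx : y = x := by simpa using hy
            subst hyx
            exact mem_segment.2 ⟨m, by omega, hm⟩
        obtain ⟨N, hN⟩ := key
        refine eventually_atTop.2 ⟨N, fun n hn' => ⟨_, Part.mem_some _, ?_⟩⟩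
        rw [hW, hp, (sub n).antisymm (hN n hn'), compl_compl]
  · rintro ⟨h, -, -, -, hl⟩
    let I : Informant := fun n => (n, true)
    have hI : IsInformant I Set.univ := by
      constructor <;> ext <;> simp [posI, negI, I]
    obtain ⟨-, hB⟩ := (hl _ (Or.inl rfl)).2 I trivial hI
    obtain ⟨n, e, he, hWe⟩ := hB.exists
    rw [hI.1] at hWe
    let J : Informant := fun m => (m, decide (m ≠ n))
    have hJ : IsInformant J {n}ᶜ := by
      constructor <;> ext <;> simp [posI, negI, J]
    have hseg : segment J n = segment I n := by
      refine List.map_congr_left fun m hm => ?_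
      have : m ≠ n := (List.mem_range.1 hm).ne
      simp [I, J, this]
    obtain ⟨hC, hB'⟩ := (hl _ (Or.inr ⟨n, rfl⟩)).2 J trivial hJ
    obtain ⟨t, ⟨e', he', hWe'⟩, ht⟩ := (hB'.and (eventually_gt_atTop n)).exists
    refine hC n t ht e ?_ e' he' ?_
    · simpa [Gop, hseg] using he
    · rw [hWe, hWe', hJ.1]
      refine (Set.ssubset_univ_iff).2 fun h' => ?_
      have : n ∈ ({n}ᶜ : Set ℕ) := h' ▸ Set.mem_univ n
      exact this rfl

end InfBc
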